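/- (Littlewood) For n variables x_1,...,x_n, the sum of Schur functions Σ_{λ∈P_n} s_λ(x_1,...,x_n), over all partitions λ of Frobenius form (α_1,...,α_r | α_1+1,...,α_r+1) with α_1 ≤ n−1, equals Π_{1≤i<j≤n}(1 + x_i x_j). -/

import Mathlib

open Finset

/-- Partitions of Frobenius form `(α₁,…,α_r | α₁+1,…,α_r+1)` with at most `n` parts,
encoded as antitone functions `Fin n → Fin n` (0-indexed parts): antitone, and every
diagonal cell `i` (i.e. `λ_i ≥ i+1`, 0-indexed row `i`) has conjugate part
`λ'_{i+1} = λ_{i+1} + 1`, i.e. `#{j | λ_j ≥ i+1} = λ_i + 1`. -/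
def frobeniusSet (n : ℕ) : Finset (Fin n → Fin n) :=
  Finset.univ.filter (fun l =>
    (∀ i j : Fin n, i ≤ j → l j ≤ l i) ∧
    ∀ i : Fin n, (i : ℕ) + 1 ≤ (l i : ℕ) →
      (Finset.univ.filter (fun j : Fin n => (i : ℕ) + 1 ≤ (l j : ℕ))).card = (l i : ℕ) + 1)

/-- The Schur polynomial in `n` variables, via the bialternant formula
`s_λ = det(x_i^{λ_j + n − j}) / Π_{i<j}(x_i − x_j)` (0-indexed: exponent
`λ_j + n − 1 − j`). -/
def schur {F : Type*} [Field F] {n : ℕ} (l : Fin n → Fin n) (x : Fin n → F) : F :=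
  Matrix.det (Matrix.of fun i j : Fin n => x i ^ ((l j : ℕ) + (n - 1 - (j : ℕ)))) /
    ∏ i : Fin n, ∏ j ∈ Ioi i, (x i - x j)

/-!
For `n > 0`, the partitions for `n + 1` arise from those for `n` by either appending a zero part or
prepending the hook `(n - 1 | n)`. In terms of the exponents `λ_j - j` of the alternant, this means
appending the column `-n` or prepending the column `n`. Since alternants are alternating in their
columns, the sum of all of them collapses, by induction, to a single determinant with columns
`x ^ (N + k) + (-1) ^ k * x ^ (N - k)` (and `x ^ N` for `k = 0`), where `k` runs from `N = n - 1`
down to `0`.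

Up to the factor `x ^ N` such a column is a monic polynomial of degree `k` in `x - 1 / x`, namely
the Dickson polynomial with parameter `-1`. So the determinant is the projective Vandermonde
determinant in `(x_i ^ 2 - 1 : x_i)`, and
`x_j * (x_i ^ 2 - 1) - x_i * (x_j ^ 2 - 1) = (x_i - x_j) * (1 + x_i * x_j)`.
-/

section FrobeniusSet

variable {n : ℕ}

/-- The partition `λ` regarded as a partition with one more, zero, part. -/
def appendZero (l : Fin n → Fin n) : Fin (n + 1) → Fin (n + 1) :=
  Fin.snoc (α := fun _ => Fin (n + 1)) (Fin.castSucc ∘ l) 0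

/-- The partition `(n, λ₁ + 1, …, λ_n + 1)`, obtained from `λ` by prepending `(n - 1 | n)` to its
Frobenius notation. -/
def consHook (l : Fin n → Fin n) : Fin (n + 1) → Fin (n + 1) :=
  Fin.cons (α := fun _ => Fin (n + 1)) (Fin.last n) (Fin.succ ∘ l)

lemma mem_frobeniusSet {l : Fin n → Fin n} :
    l ∈ frobeniusSet n ↔ Antitone l ∧ ∀ i, i < l i → #{j | i < l j} = (l i : ℕ) + 1 := by
  simp only [frobeniusSet, mem_filter, mem_univ, true_and, Antitone, Nat.succ_le_iff,
    Fin.val_fin_lt]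

lemma appendZero_castSucc (l : Fin n → Fin n) (j : Fin n) :
    appendZero l j.castSucc = (l j).castSucc :=
  Fin.snoc_castSucc ..

lemma appendZero_last (l : Fin n → Fin n) : appendZero l (Fin.last n) = 0 :=
  Fin.snoc_last ..

lemma consHook_zero (l : Fin n → Fin n) : consHook l 0 = Fin.last n :=
  rfl

lemma consHook_succ (l : Fin n → Fin n) (j : Fin n) : consHook l j.succ = (l j).succ :=
  rfl

lemma appendZero_injective : Function.Injective (appendZero (n := n)) := fun l m h =>
  funext fun j => by simpa only [appendZero_castSucc, Fin.castSucc_inj] using congrFun h j.castSucc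

lemma consHook_injective : Function.Injective (consHook (n := n)) := fun l m h =>
  funext fun j => by simpa only [consHook_succ, Fin.succ_inj] using congrFun h j.succ

lemma consHook_last_ne_zero (hn : 0 < n) (l : Fin n → Fin n) : consHook l (Fin.last n) ≠ 0 := by
  obtain ⟨m, rfl⟩ := Nat.exists_eq_add_of_lt hn
  rw [← Fin.succ_last, consHook_succ]
  exact Fin.succ_ne_zero _

lemma antitone_appendZero {l : Fin n → Fin n} : Antitone (appendZero l) ↔ Antitone l := by
  simp [Antitone, Fin.forall_fin_succ', appendZero_castSucc, appendZero_last, Fin.le_last]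

lemma antitone_consHook {l : Fin n → Fin n} : Antitone (consHook l) ↔ Antitone l := by
  simp [Antitone, Fin.forall_fin_succ, consHook_zero, consHook_succ, Fin.le_last]

lemma card_lt_appendZero (l : Fin n → Fin n) (i : Fin n) :
    #{j | i.castSucc < appendZero l j} = #{j | i < l j} := by
  simp only [card_filter, Fin.sum_univ_castSucc, appendZero_castSucc, appendZero_last,
    Fin.castSucc_lt_castSucc_iff, Fin.not_lt_zero, if_false, add_zero]

lemma card_lt_consHook (l : Fin n → Fin n) {i : Fin n} (hi : i.succ < Fin.last n) :
    #{j | i.succ < consHook l j} = #{j | i < l j} + 1 := by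
  simp only [Fin.card_filter_univ_succ, consHook_zero, consHook_succ, Fin.succ_lt_succ_iff, hi,
    if_true]

lemma card_zero_lt_consHook (hn : 0 < n) (l : Fin n → Fin n) :
    #{j | 0 < consHook l j} = n + 1 := by
  have pos (j) : 0 < consHook l j := Fin.cases hn (fun _ => Fin.succ_pos _) j
  simp only [pos, filter_true, card_univ, Fintype.card_fin]

lemma appendZero_mem_frobeniusSet {l : Fin n → Fin n} :
    appendZero l ∈ frobeniusSet (n + 1) ↔ l ∈ frobeniusSet n := by
  simp [mem_frobeniusSet, antitone_appendZero, Fin.forall_fin_succ', appendZero_castSucc,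
    appendZero_last, card_lt_appendZero]

lemma consHook_mem_frobeniusSet {l : Fin n → Fin n} :
    consHook l ∈ frobeniusSet (n + 1) ↔ l ∈ frobeniusSet n := by
  obtain rfl | hn := n.eq_zero_or_pos
  · decide +revert
  have card_iff (i : Fin n) (hi : i < l i) :
      #{j | i.succ < consHook l j} = (l i : ℕ) + 1 + 1 ↔ #{j | i < l j} = (l i : ℕ) + 1 := by
    rw [card_lt_consHook l ((Fin.succ_lt_succ_iff.2 hi).trans_le (Fin.le_last _)), add_left_inj]
  simp +contextual [mem_frobeniusSet, antitone_consHook, Fin.forall_fin_succ, consHook_zero,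
    consHook_succ, card_zero_lt_consHook hn, card_iff]

lemma exists_appendZero_eq {l : Fin (n + 1) → Fin (n + 1)} (hl : l ∈ frobeniusSet (n + 1))
    (hlast : l (Fin.last n) = 0) : ∃ m, appendZero m = l := by
  obtain ⟨hanti, hcard⟩ := mem_frobeniusSet.1 hl
  have ne_last (j : Fin n) : l j.castSucc ≠ Fin.last n := by
    intro h
    have first_eq : l 0 = Fin.last n := Fin.last_le_iff.1 (h ▸ hanti (Fin.zero_le _))
    have all_pos : #{j | 0 < l j} = n + 1 := by
      rw [hcard 0 (first_eq ▸ j.pos), first_eq, Fin.val_last]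
    have not_all_pos : #{j | 0 < l j} < n + 1 := by
      simpa using card_lt_univ_of_notMem (s := {j | 0 < l j}) (x := Fin.last n) (by simp [hlast])
    exact not_all_pos.ne all_pos
  refine ⟨fun j => (l j.castSucc).castPred (ne_last j),
    funext (Fin.lastCases ((appendZero_last _).trans hlast.symm) fun j => ?_)⟩
  rw [appendZero_castSucc, Fin.castSucc_castPred]

lemma exists_consHook_eq {l : Fin (n + 1) → Fin (n + 1)} (hl : l ∈ frobeniusSet (n + 1))
    (hlast : l (Fin.last n) ≠ 0) : ∃ m, consHook m = l := by
  obtain ⟨hanti, hcard⟩ := mem_frobeniusSet.1 hl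
  have pos (j) : 0 < l j := (Fin.pos_iff_ne_zero.2 hlast).trans_le (hanti j.le_last)
  have first_eq : l 0 = Fin.last n := by
    have h := hcard 0 (pos 0)
    simp only [pos, filter_true, card_univ, Fintype.card_fin] at h
    exact Fin.ext (by simpa using h.symm)
  refine ⟨fun j => (l j.succ).pred (pos _).ne', funext (Fin.cases first_eq.symm fun j => ?_)⟩
  rw [consHook_succ, Fin.succ_pred]

lemma frobeniusSet_succ :
    frobeniusSet (n + 1) = (frobeniusSet n).image consHook ∪ (frobeniusSet n).image appendZero := by
  ext l
  simp only [mem_union, mem_image]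
  constructor
  · intro hl
    by_cases hlast : l (Fin.last n) = 0
    · obtain ⟨m, rfl⟩ := exists_appendZero_eq hl hlast
      exact .inr ⟨m, appendZero_mem_frobeniusSet.1 hl, rfl⟩
    · obtain ⟨m, rfl⟩ := exists_consHook_eq hl hlast
      exact .inl ⟨m, consHook_mem_frobeniusSet.1 hl, rfl⟩
  · rintro (⟨m, hm, rfl⟩ | ⟨m, hm, rfl⟩)
    · exact consHook_mem_frobeniusSet.2 hm
    · exact appendZero_mem_frobeniusSet.2 hm

lemma disjoint_image_consHook_image_appendZero (hn : 0 < n) (s t : Finset (Fin n → Fin n)) :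
    Disjoint (s.image consHook) (t.image appendZero) := by
  simp only [disjoint_left, mem_image]
  rintro _ ⟨l, -, rfl⟩ ⟨m, -, h⟩
  exact consHook_last_ne_zero hn l (h ▸ appendZero_last m)

lemma sum_frobeniusSet_succ {M : Type*} [AddCommMonoid M] (hn : 0 < n)
    (g : (Fin (n + 1) → Fin (n + 1)) → M) :
    ∑ l ∈ frobeniusSet (n + 1), g l =
      ∑ l ∈ frobeniusSet n, (g (consHook l) + g (appendZero l)) := by
  rw [frobeniusSet_succ, sum_union (disjoint_image_consHook_image_appendZero hn _ _),
    sum_image consHook_injective.injOn, sum_image appendZero_injective.injOn, sum_add_distrib]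

end FrobeniusSet

section BetaSeq

variable {V : Type*} {n : ℕ} (c : ℤ → V) (l : Fin n → Fin n)

/-- The terms of a sequence `c` at the indices `λ_j - j`, which up to a shift are the
exponents in the alternant of `λ`. -/
def betaSeq : Fin n → V :=
  fun j => c ((l j : ℤ) - j)

lemma betaSeq_appendZero :
    betaSeq c (appendZero l) = Fin.snoc (α := fun _ => V) (betaSeq c l) (c (-n)) := by
  funext j
  refine Fin.lastCases ?_ (fun j => ?_) j <;>
    simp [betaSeq, appendZero_last, appendZero_castSucc]

lemma betaSeq_consHook : betaSeq c (consHook l) = Matrix.vecCons (c n) (betaSeq c l) := by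
  funext j
  refine Fin.cases ?_ (fun j => ?_) j <;> simp [betaSeq, consHook_zero, consHook_succ]

end BetaSeq

section AlternatingFold

variable {R V W : Type*} [CommSemiring R] [AddCommGroup V] [Module R V] [AddCommGroup W]
  [Module R W] {n : ℕ}

/-- The sequence `c` folded at `0`: `c_k + (-1)^k c_{-k}`, with the term `c_0` counted once. It
arises by moving the last entry `c_{-k}` of an alternating form to the place of the first, `c_k`. -/
def alternatingFold (c : ℤ → V) (k : ℕ) : V :=
  if k = 0 then c 0 else c k + (-1 : ℤ) ^ k • c (-k)

lemma map_snoc_eq_smul_map_vecCons (f : V [⋀^Fin (n + 1)]→ₗ[R] W) (v : Fin n → V) (a : V) :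
    f (Fin.snoc (α := fun _ => V) v a) = (-1 : ℤ) ^ n • f (Matrix.vecCons a v) := by
  rw [Fin.snoc_eq_cons_rotate]
  refine (f.map_perm (Matrix.vecCons a v) (finRotate _)).trans ?_
  rw [sign_finRotate, Units.smul_def, Units.val_pow_eq_pow_val, Units.val_neg, Units.val_one,
    Nat.add_sub_cancel]

lemma map_betaSeq_consHook_add_map_betaSeq_appendZero (hn : 0 < n) (c : ℤ → V)
    (f : V [⋀^Fin (n + 1)]→ₗ[R] W) (l : Fin n → Fin n) :
    f (betaSeq c (consHook l)) + f (betaSeq c (appendZero l)) =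
      f.curryLeft (alternatingFold c n) (betaSeq c l) := by
  rw [betaSeq_consHook, betaSeq_appendZero, map_snoc_eq_smul_map_vecCons, alternatingFold,
    if_neg hn.ne', map_add, map_zsmul]
  rfl

theorem sum_frobeniusSet_map_betaSeq (c : ℤ → V) (f : V [⋀^Fin n]→ₗ[R] W) :
    ∑ l ∈ frobeniusSet n, f (betaSeq c l) = f fun j => alternatingFold c j.rev := by
  induction n with
  | zero =>
    have frobeniusSet_zero : frobeniusSet 0 = {id} := by decide
    rw [frobeniusSet_zero, sum_singleton]
    exact congrArg f (Subsingleton.elim _ _)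
  | succ n ih =>
    obtain rfl | hn := n.eq_zero_or_pos
    · have frobeniusSet_one : frobeniusSet 1 = {id} := by decide
      rw [frobeniusSet_one, sum_singleton]
      congr 1
      funext j
      simp [alternatingFold, betaSeq]
    · rw [sum_frobeniusSet_succ hn]
      simp only [map_betaSeq_consHook_add_map_betaSeq_appendZero hn, ih]
      rw [AlternatingMap.curryLeft_apply_apply]
      congr 1
      funext j
      refine Fin.cases ?_ (fun j => ?_) j <;> simp

end AlternatingFold

section Dickson

open Polynomial

variable {R : Type*} [CommRing R]

lemma isMonicOfDegree_dickson_succ [Nontrivial R] (k : ℕ) (a : R) (n : ℕ) :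
    (dickson k a (n + 1)).IsMonicOfDegree (n + 1) := by
  induction n using Nat.twoStepInduction with
  | zero => exact isMonicOfDegree_X R
  | one =>
    rw [dickson_two]
    refine ((isMonicOfDegree_X R).pow 2).sub ?_
    have natDegree_le_zero : (C a * (3 - k : R[X])).natDegree ≤ 0 := by compute_degree
    omega
  | more n ih₀ ih₁ =>
    rw [dickson_add_two, add_comm (n + 2) 1]
    refine ((isMonicOfDegree_X R).mul ih₁).sub ?_
    exact ((natDegree_C_mul_le a _).trans_eq ih₀.natDegree_eq).trans_lt (by omega)

lemma eval_homogenize_X_mul {p : R[X]} {N : ℕ} (hp : p.natDegree ≤ N) (u v : R) :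
    MvPolynomial.eval ![u, v] ((X * p).homogenize (N + 1)) =
      u * MvPolynomial.eval ![u, v] (p.homogenize N) := by
  rw [add_comm, homogenize_mul _ _ natDegree_X_le hp]
  simp

/-- The homogeneous form of `D_k(x + a / x) = x ^ k + (a / x) ^ k`, multiplied by `x ^ (m + k)`. -/
lemma eval_homogenize_dickson_one (a x : R) (k m : ℕ) :
    MvPolynomial.eval ![x ^ 2 + a, x] ((dickson 1 a k).homogenize (m + k)) =
      x ^ (m + 2 * k) + a ^ k * x ^ m := by
  nontriviality R
  induction k using Nat.twoStepInduction generalizing m with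
  | zero =>
    have dickson_zero_eq_C : dickson 1 a 0 = C 2 := by
      rw [dickson_zero, C_ofNat]
      norm_num
    simp only [dickson_zero_eq_C, homogenize_C, map_mul, map_pow, MvPolynomial.eval_C,
      MvPolynomial.eval_X, Matrix.cons_val_one, Matrix.cons_val_fin_one]
    ring
  | one =>
    simp only [dickson_one, homogenize_X m.succ_ne_zero, map_mul, map_pow, MvPolynomial.eval_X,
      Matrix.cons_val_zero, Matrix.cons_val_one, Matrix.cons_val_fin_one, Nat.succ_sub_one]
    ring
  | more k ih₀ ih₁ =>
    have natDegree_le : (dickson 1 a (k + 1)).natDegree ≤ m + (k + 1) :=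
      (isMonicOfDegree_dickson_succ 1 a k).natDegree_eq.trans_le (Nat.le_add_left _ _)
    have eval_X_mul := eval_homogenize_X_mul natDegree_le (x ^ 2 + a) x
    have eval_lower := ih₀ (m + 2)
    rw [add_assoc, add_comm 2 k] at eval_lower
    rw [add_assoc, ih₁] at eval_X_mul
    rw [dickson_add_two, homogenize_sub, homogenize_C_mul, map_sub, map_mul, MvPolynomial.eval_C,
      eval_X_mul, eval_lower]
    ring

/-- The Dickson polynomial of the first kind, made monic in degree `0` by replacing the constant
`2` by `1`, to match the single term `c_0` in `alternatingFold`. -/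
noncomputable def monicDickson (a : R) (k : ℕ) : R[X] :=
  if k = 0 then 1 else dickson 1 a k

lemma isMonicOfDegree_monicDickson [Nontrivial R] (a : R) (k : ℕ) :
    (monicDickson a k).IsMonicOfDegree k := by
  cases k with
  | zero => exact isMonicOfDegree_zero_iff.2 rfl
  | succ k => exact isMonicOfDegree_dickson_succ 1 a k

lemma eval_homogenize_eq_sum_range (p : R[X]) (N : ℕ) (u v : R) :
    MvPolynomial.eval ![u, v] (p.homogenize N) =
      ∑ m ∈ range (N + 1), p.coeff m * (u ^ m * v ^ (N - m)) := by
  simp [homogenize, Finset.Nat.sum_antidiagonal_eq_sum_range_succ_mk, MvPolynomial.eval_monomial,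
    Finsupp.prod_fintype]

lemma of_eval_homogenize_eq_projVandermonde_mul {n : ℕ} (v w : Fin n → R) (p : ℕ → R[X]) :
    (Matrix.of fun i j : Fin n => MvPolynomial.eval ![v i, w i] ((p j.rev).homogenize (n - 1))) =
      Matrix.projVandermonde w v *
        (Matrix.of fun i j : Fin n => (p j).coeff i).submatrix Fin.revPerm Fin.revPerm := by
  ext i j
  simp only [Matrix.of_apply, Matrix.mul_apply, Matrix.projVandermonde_apply,
    Matrix.submatrix_apply, Fin.revPerm_apply]
  rw [eval_homogenize_eq_sum_range, Nat.sub_add_cancel i.pos,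
    ← Fin.sum_univ_eq_sum_range fun m => (p j.rev).coeff m * (v i ^ m * w i ^ (n - 1 - m)),
    ← Equiv.sum_comp Fin.revPerm]
  refine sum_congr rfl fun m _ => ?_
  have rev_rev : n - 1 - m.rev = m := by rw [Fin.val_rev]; omega
  rw [Fin.revPerm_apply, rev_rev]
  ring

lemma det_eval_homogenize_eq_det_projVandermonde {n : ℕ} (v w : Fin n → R) {p : ℕ → R[X]}
    (hp : ∀ k, (p k).IsMonicOfDegree k) :
    (Matrix.of fun i j : Fin n =>
      MvPolynomial.eval ![v i, w i] ((p j.rev).homogenize (n - 1))).det =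
      (Matrix.projVandermonde w v).det := by
  rw [of_eval_homogenize_eq_projVandermonde_mul, Matrix.det_mul, Matrix.det_submatrix_equiv_self,
    Matrix.det_matrixOfPolynomials (fun j : Fin n => p j) (fun j => (hp j).natDegree_eq)
      (fun j => (hp j).monic), mul_one]

end Dickson

section Alternant

variable {R : Type*} [CommRing R] {n : ℕ}

/-- The columns `x_i ^ (N + e)` from which alternants are built. They are indexed by all `e : ℤ`,
but only `-N ≤ e` is meaningful: for smaller `e` the exponent is truncated to `0`. -/
def powSeq (x : Fin n → R) (N : ℕ) (e : ℤ) : Fin n → R :=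
  fun i => x i ^ (N + e).toNat

lemma det_alternant_eq_detRowAlternating (l : Fin n → Fin n) (x : Fin n → R) :
    (Matrix.of fun i j : Fin n => x i ^ ((l j : ℕ) + (n - 1 - j))).det =
      Matrix.detRowAlternating (betaSeq (powSeq x (n - 1)) l) := by
  refine (Matrix.det_transpose _).symm.trans (congrArg Matrix.detRowAlternating ?_)
  ext j i
  simp only [Matrix.transpose_apply, Matrix.of_apply, betaSeq, powSeq]
  congr 1
  omega

lemma alternatingFold_powSeq (x : Fin n → R) {k N : ℕ} (hk : k ≤ N) (i : Fin n) :
    alternatingFold (powSeq x N) k i =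
      MvPolynomial.eval ![x i ^ 2 - 1, x i] ((monicDickson (-1) k).homogenize N) := by
  by_cases hk₀ : k = 0
  · simp [hk₀, alternatingFold, powSeq, monicDickson]
  · obtain ⟨m, rfl⟩ := Nat.exists_eq_add_of_le' hk
    have toNat_neg : ((m + k : ℕ) + -k : ℤ).toNat = m := by omega
    have toNat_pos : ((m + k : ℕ) + k : ℤ).toNat = m + 2 * k := by omega
    rw [monicDickson, if_neg hk₀, sub_eq_add_neg, eval_homogenize_dickson_one, alternatingFold,
      if_neg hk₀, Pi.add_apply, Pi.smul_apply, powSeq, powSeq, toNat_neg, toNat_pos]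
    simp

lemma detRowAlternating_alternatingFold_powSeq (x : Fin n → R) :
    Matrix.detRowAlternating (fun j : Fin n => alternatingFold (powSeq x (n - 1)) j.rev) =
      (Matrix.projVandermonde x fun i => x i ^ 2 - 1).det := by
  nontriviality R
  rw [← det_eval_homogenize_eq_det_projVandermonde _ _ (isMonicOfDegree_monicDickson (-1)),
    ← Matrix.det_transpose]
  refine congrArg Matrix.detRowAlternating ?_
  ext j i
  exact alternatingFold_powSeq x (by omega) i

lemma det_projVandermonde_sq_sub_one (x : Fin n → R) :
    (Matrix.projVandermonde x fun i => x i ^ 2 - 1).det =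
      (∏ i, ∏ j ∈ Ioi i, (1 + x i * x j)) * ∏ i, ∏ j ∈ Ioi i, (x i - x j) := by
  simp only [Matrix.det_projVandermonde, ← prod_mul_distrib]
  refine prod_congr rfl fun i _ => prod_congr rfl fun j _ => ?_
  ring

theorem littlewood_general (x : Fin n → R) :
    ∑ l ∈ frobeniusSet n, (Matrix.of fun i j : Fin n => x i ^ ((l j : ℕ) + (n - 1 - j))).det =
      (∏ i, ∏ j ∈ Ioi i, (1 + x i * x j)) * ∏ i, ∏ j ∈ Ioi i, (x i - x j) := by
  simp only [det_alternant_eq_detRowAlternating]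
  rw [sum_frobeniusSet_map_betaSeq, detRowAlternating_alternatingFold_powSeq,
    det_projVandermonde_sq_sub_one]

lemma prod_Ioi_sub_ne_zero [IsDomain R] {x : Fin n → R} (hx : Function.Injective x) :
    ∏ i, ∏ j ∈ Ioi i, (x i - x j) ≠ 0 :=
  prod_ne_zero_iff.2 fun _ _ => prod_ne_zero_iff.2 fun _ hj =>
    sub_ne_zero.2 (hx.ne (mem_Ioi.1 hj).ne)

end Alternant

/-- Littlewood: `Σ_{λ ∈ 𝒫_n} s_λ(x₁,…,x_n) = Π_{1≤i<j≤n}(1 + x_i x_j)`. -/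
theorem littlewood (F : Type*) [Field F] (n : ℕ) (x : Fin n → F)
    (hx : Function.Injective x) :
    ∑ l ∈ frobeniusSet n, schur l x = ∏ i : Fin n, ∏ j ∈ Ioi i, (1 + x i * x j) := by
  simp only [schur, ← sum_div]
  rw [littlewood_general, mul_div_cancel_right₀ _ (prod_Ioi_sub_ne_zero hx)]
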